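/- (Corollary 1, equation (16)) If u_1^† R u_3 ≠ 0, then exp(j·ε_tx,K) = (u_1^† R u_1) / (u_1^† R u_3). -/

import Mathlib

open scoped BigOperators

/-- Steering vector `a(ε) ∈ ℂ^{n+1}` with entries `exp(j·i·ε)`, `i = 0,…,n`. -/
noncomputable def steer (n : ℕ) (ε : ℝ) : Fin (n + 1) → ℂ :=
  fun i => Complex.exp (Complex.I * ((i : ℕ) : ℂ) * (ε : ℂ))

/-- The vector `E(η_1,…,η_m) ∈ ℂ^{m+1}` defined recursively by
`E(η_1) = (1, −exp(j·η_1))` and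
`E(η_1,…,η_p) = (E(η_1,…,η_{p−1}), 0) − exp(j·η_p)·(0, E(η_1,…,η_{p−1}))`
(with base case `E() = (1)`, which reproduces the stated base case at `m = 1`). -/
noncomputable def Evec : (m : ℕ) → (Fin m → ℝ) → (Fin (m + 1) → ℂ)
  | 0, _ => fun _ => 1
  | m + 1, η => fun i =>
      Fin.snoc (α := fun _ => ℂ) (Evec m fun j => η j.castSucc) 0 i -
        Complex.exp (Complex.I * (η (Fin.last m) : ℂ)) *
          Fin.cons (α := fun _ => ℂ) 0 (Evec m fun j => η j.castSucc) i

/-- The cyclic down-shift matrix on `ℂ^{n+1}`: `(Lv)_0 = v_n`, `(Lv)_i = v_{i−1}` for `i ≥ 1`. -/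
def Lmat (n : ℕ) : Matrix (Fin (n + 1)) (Fin (n + 1)) ℂ :=
  Matrix.of fun i l => if l = i - 1 then 1 else 0

/-- Kronecker product of vectors: `(v ⊗ w)_{(i,l)} = v_i · w_l`. -/
def kron {a b : Type*} (v : a → ℂ) (w : b → ℂ) : a × b → ℂ :=
  fun p => v p.1 * w p.2

/-- `x^† y = Σ_i conj(x_i) · y_i`. -/
noncomputable def ip {n : Type*} [Fintype n] (x y : n → ℂ) : ℂ :=
  ∑ i, (starRingEnd ℂ) (x i) * y i

/-- `x^† M y = Σ_{i,l} conj(x_i) · M_{i,l} · y_l`. -/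
noncomputable def qf {n : Type*} [Fintype n] (x : n → ℂ) (M : Matrix n n ℂ) (y : n → ℂ) : ℂ :=
  ∑ i, ∑ l, (starRingEnd ℂ) (x i) * M i l * y l

/-- `E(η_1,…,η_Kp) ∈ ℂ^{Kp+1}` padded with a trailing zero, giving a vector in `ℂ^{Kp+2}`. -/
noncomputable def Epad (Kp : ℕ) (η : Fin Kp → ℝ) : Fin (Kp + 2) → ℂ :=
  Fin.snoc (Evec Kp η) 0

/-- `u_0 = Ẽ_tx ⊗ Ẽ_rx`. -/
noncomputable def u0 (Kp : ℕ) (ηt ηr : Fin Kp → ℝ) : Fin (Kp + 2) × Fin (Kp + 2) → ℂ :=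
  kron (Epad Kp ηt) (Epad Kp ηr)

/-- `u_1 = Ẽ_tx ⊗ (L·Ẽ_rx)`. -/
noncomputable def u1 (Kp : ℕ) (ηt ηr : Fin Kp → ℝ) : Fin (Kp + 2) × Fin (Kp + 2) → ℂ :=
  kron (Epad Kp ηt) ((Lmat (Kp + 1)).mulVec (Epad Kp ηr))

/-- `u_2 = (L·Ẽ_tx) ⊗ Ẽ_rx`. -/
noncomputable def u2 (Kp : ℕ) (ηt ηr : Fin Kp → ℝ) : Fin (Kp + 2) × Fin (Kp + 2) → ℂ :=
  kron ((Lmat (Kp + 1)).mulVec (Epad Kp ηt)) (Epad Kp ηr)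

/-- `u_3 = (L·Ẽ_tx) ⊗ (L·Ẽ_rx)`. -/
noncomputable def u3 (Kp : ℕ) (ηt ηr : Fin Kp → ℝ) : Fin (Kp + 2) × Fin (Kp + 2) → ℂ :=
  kron ((Lmat (Kp + 1)).mulVec (Epad Kp ηt)) ((Lmat (Kp + 1)).mulVec (Epad Kp ηr))

/-- The noiseless auto-correlation matrix `R = Σ_{k=1}^K σ_k² A_k A_k^†`, where
`A_k = a(ε_tx,k) ⊗ a(ε_rx,k)` and `σsq k` is the power `σ_k²`. -/
noncomputable def Rmat (K : ℕ) (εtx εrx σsq : Fin K → ℝ) :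
    Matrix (Fin (K + 1) × Fin (K + 1)) (Fin (K + 1) × Fin (K + 1)) ℂ :=
  Matrix.of fun p q => ∑ k, (σsq k : ℂ) *
    kron (steer K (εtx k)) (steer K (εrx k)) p *
    (starRingEnd ℂ) (kron (steer K (εtx k)) (steer K (εrx k)) q)

/-- The rank-one matrix `R_ε = a(ε) a(ε)^† ∈ ℂ^{(Kp+2)×(Kp+2)}`. -/
noncomputable def Rsingle (Kp : ℕ) (ε : ℝ) : Matrix (Fin (Kp + 2)) (Fin (Kp + 2)) ℂ :=
  Matrix.of fun i l => steer (Kp + 1) ε i * (starRingEnd ℂ) (steer (Kp + 1) ε l)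

/-- The iDEA cost `Q_tx(φ) = (u_1 − exp(j·φ)·u_3)^† R (u_1 − exp(j·φ)·u_3)`. -/
noncomputable def Qcost (Kp : ℕ) (εtx εrx σsq : Fin (Kp + 1) → ℝ)
    (ηt ηr : Fin Kp → ℝ) (φ : ℝ) : ℂ :=
  qf (u1 Kp ηt ηr - Complex.exp (Complex.I * (φ : ℂ)) • u3 Kp ηt ηr)
    (Rmat (Kp + 1) εtx εrx σsq)
    (u1 Kp ηt ηr - Complex.exp (Complex.I * (φ : ℂ)) • u3 Kp ηt ηr)

/-- The closed-form value `4^{2K−1} · Σ_k σ_k² sin²((ε_tx,k − φ)/2) ∏_m sin²((ε_tx,k − ε̂_tx,m)/2)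
∏_n sin²((ε_rx,k − ε̂_rx,n)/2)` (here `K = Kp + 1`, so `2K − 1 = 2·Kp + 1`). -/
noncomputable def Ssum (Kp : ℕ) (εtx εrx σsq : Fin (Kp + 1) → ℝ)
    (ηt ηr : Fin Kp → ℝ) (φ : ℝ) : ℝ :=
  (4 : ℝ) ^ (2 * Kp + 1) * ∑ k, σsq k * Real.sin ((εtx k - φ) / 2) ^ 2 *
    (∏ m, Real.sin ((εtx k - ηt m) / 2) ^ 2) *
    (∏ n, Real.sin ((εrx k - ηr n) / 2) ^ 2)

/-- The `k = K` term of `Ssum`, i.e. the lower bound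
`4^{2K−1} · σ_K² sin²((ε_tx,K − φ)/2) ∏_m sin²((ε_tx,K − ε̂_tx,m)/2) ∏_n sin²((ε_rx,K − ε̂_rx,n)/2)`. -/
noncomputable def Slb (Kp : ℕ) (εtx εrx σsq : Fin (Kp + 1) → ℝ)
    (ηt ηr : Fin Kp → ℝ) (φ : ℝ) : ℝ :=
  (4 : ℝ) ^ (2 * Kp + 1) * σsq (Fin.last Kp) *
    Real.sin ((εtx (Fin.last Kp) - φ) / 2) ^ 2 *
    (∏ m, Real.sin ((εtx (Fin.last Kp) - ηt m) / 2) ^ 2) *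
    (∏ n, Real.sin ((εrx (Fin.last Kp) - ηr n) / 2) ^ 2)

/-!
By its recursion, `E(η_1,…,η_m)` lists the coefficients of `∏ (1 − exp(j·η_k)·t)`, whose roots are
`t = exp(−j·η_k)`; hence `a(ε)^† E(η_1,…,η_m)`, the value of this polynomial at `exp(−j·ε)`, vanishes
when `ε` is one of the `η_k`, and `R` annihilates `E(ε_tx,1,…,ε_tx,K) ⊗ w` for every `w`. The last
step of the recursion reads `E(ε_tx,1,…,ε_tx,K) = Ẽ_tx − exp(j·ε_tx,K)·L·Ẽ_tx`, so
`R u_1 = exp(j·ε_tx,K) · R u_3`.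
-/

open Matrix

lemma qf_eq_star_dotProduct_mulVec {n : Type*} [Fintype n] (x : n → ℂ) (M : Matrix n n ℂ)
    (y : n → ℂ) : qf x M y = star x ⬝ᵥ M *ᵥ y := by
  simp only [qf, dotProduct, mulVec, Pi.star_apply, starRingEnd_apply, Finset.mul_sum, mul_assoc]

section kron

variable {a b : Type*}

lemma kron_sub_smul (c : ℂ) (x y : a → ℂ) (w : b → ℂ) :
    kron (x - c • y) w = kron x w - c • kron y w := by
  ext p
  simp only [kron, Pi.sub_apply, Pi.smul_apply, smul_eq_mul]
  ring

lemma star_kron_dotProduct_kron [Fintype a] [Fintype b] (x z : a → ℂ) (y w : b → ℂ) :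
    star (kron x y) ⬝ᵥ kron z w = (star x ⬝ᵥ z) * (star y ⬝ᵥ w) := by
  simp only [dotProduct, kron, Pi.star_apply, star_mul', Fintype.sum_prod_type, Finset.sum_mul_sum,
    mul_mul_mul_comm]

end kron

lemma star_steer_apply (n : ℕ) (ε : ℝ) (i : Fin (n + 1)) :
    star (steer n ε) i = Complex.exp (-(Complex.I * ε)) ^ (i : ℕ) := by
  rw [Pi.star_apply, ← starRingEnd_apply, steer, ← Complex.exp_conj, ← Complex.exp_nat_mul]
  congr 1
  simp only [map_mul, Complex.conj_I, Complex.conj_natCast, Complex.conj_ofReal]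
  ring

lemma Evec_succ (m : ℕ) (η : Fin (m + 1) → ℝ) :
    Evec (m + 1) η =
      (Fin.snoc (Evec m fun j => η j.castSucc) 0 : Fin (m + 2) → ℂ) -
        Complex.exp (Complex.I * η (Fin.last m)) •
          (Fin.cons 0 (Evec m fun j => η j.castSucc) : Fin (m + 2) → ℂ) :=
  rfl

lemma sum_pow_mul_Evec (m : ℕ) (η : Fin m → ℝ) (t : ℂ) :
    ∑ i : Fin (m + 1), t ^ (i : ℕ) * Evec m η i =
      ∏ k, (1 - Complex.exp (Complex.I * η k) * t) := by
  induction m with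
  | zero => simp [Evec]
  | succ m ih =>
    set v := Evec m fun j => η j.castSucc with hv
    have sum_snoc : ∑ i : Fin (m + 2), t ^ (i : ℕ) * (Fin.snoc v 0 : Fin (m + 2) → ℂ) i =
        ∑ i : Fin (m + 1), t ^ (i : ℕ) * v i := by
      simp [Fin.sum_univ_castSucc (n := m + 1)]
    have sum_cons : ∑ i : Fin (m + 2), t ^ (i : ℕ) * (Fin.cons 0 v : Fin (m + 2) → ℂ) i =
        t * ∑ i : Fin (m + 1), t ^ (i : ℕ) * v i := by
      simp [Fin.sum_univ_succ (n := m + 1), Finset.mul_sum, pow_succ', mul_assoc]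
    simp only [Evec_succ, Pi.sub_apply, Pi.smul_apply, smul_eq_mul, mul_sub,
      Finset.sum_sub_distrib, mul_left_comm _ (Complex.exp _), ← Finset.mul_sum, ← hv]
    rw [sum_snoc, sum_cons, hv, ih, Fin.prod_univ_castSucc]
    ring

lemma star_steer_dotProduct_Evec (m : ℕ) (ε : ℝ) (η : Fin m → ℝ) :
    star (steer m ε) ⬝ᵥ Evec m η = ∏ k, (1 - Complex.exp (Complex.I * (η k - ε))) := by
  simp only [dotProduct, star_steer_apply, sum_pow_mul_Evec, ← Complex.exp_add,
    ← sub_eq_add_neg, ← mul_sub]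

lemma star_steer_dotProduct_Evec_self {m : ℕ} (η : Fin m → ℝ) (k : Fin m) :
    star (steer m (η k)) ⬝ᵥ Evec m η = 0 := by
  rw [star_steer_dotProduct_Evec]
  exact Finset.prod_eq_zero (Finset.mem_univ k) (by simp)

lemma Rmat_eq_sum_smul_vecMulVec (K : ℕ) (εtx εrx σsq : Fin K → ℝ) :
    Rmat K εtx εrx σsq = ∑ k, (σsq k : ℂ) •
      vecMulVec (kron (steer K (εtx k)) (steer K (εrx k)))
        (star (kron (steer K (εtx k)) (steer K (εrx k)))) := by
  ext p q
  simp [Rmat, Matrix.sum_apply, vecMulVec_apply, mul_assoc]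

lemma Rmat_mulVec_kron_Evec {K : ℕ} (εtx εrx σsq : Fin K → ℝ) (w : Fin (K + 1) → ℂ) :
    Rmat K εtx εrx σsq *ᵥ kron (Evec K εtx) w = 0 := by
  simp only [Rmat_eq_sum_smul_vecMulVec, sum_mulVec, smul_mulVec, vecMulVec_mulVec,
    star_kron_dotProduct_kron, star_steer_dotProduct_Evec_self, zero_mul, MulOpposite.op_zero,
    zero_smul, smul_zero, Finset.sum_const_zero]

lemma Lmat_mulVec_apply (n : ℕ) (v : Fin (n + 1) → ℂ) (i : Fin (n + 1)) :
    (Lmat n *ᵥ v) i = v (i - 1) := by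
  simp [mulVec, dotProduct, Lmat]

lemma Lmat_mulVec_snoc (n : ℕ) (v : Fin (n + 1) → ℂ) (c : ℂ) :
    Lmat (n + 1) *ᵥ (Fin.snoc v c : Fin (n + 2) → ℂ) = (Fin.cons c v : Fin (n + 2) → ℂ) := by
  ext i
  rw [Lmat_mulVec_apply]
  cases i using Fin.cases with
  | zero =>
    have wrap : (0 - 1 : Fin (n + 2)) = Fin.last (n + 1) := sub_eq_iff_eq_add.mpr (by simp)
    rw [wrap, Fin.snoc_last, Fin.cons_zero]
  | succ j =>
    have pred : (j.succ - 1 : Fin (n + 2)) = j.castSucc := sub_eq_iff_eq_add.mpr (by simp)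
    rw [pred, Fin.snoc_castSucc, Fin.cons_succ]

lemma Epad_sub_exp_smul_Lmat_mulVec (m : ℕ) (η : Fin (m + 1) → ℝ) :
    Epad m (fun j => η j.castSucc) -
      Complex.exp (Complex.I * η (Fin.last m)) •
        Lmat (m + 1) *ᵥ Epad m (fun j => η j.castSucc) = Evec (m + 1) η := by
  rw [Epad, Lmat_mulVec_snoc, Evec_succ]

lemma Rmat_mulVec_kron_Epad {m : ℕ} (εtx εrx σsq : Fin (m + 1) → ℝ) (w : Fin (m + 2) → ℂ) :
    Rmat (m + 1) εtx εrx σsq *ᵥ kron (Epad m fun i => εtx i.castSucc) w =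
      Complex.exp (Complex.I * εtx (Fin.last m)) •
        Rmat (m + 1) εtx εrx σsq *ᵥ
          kron (Lmat (m + 1) *ᵥ Epad m fun i => εtx i.castSucc) w := by
  rw [← sub_eq_zero, ← mulVec_smul, ← mulVec_sub, ← kron_sub_smul, Epad_sub_exp_smul_Lmat_mulVec,
    Rmat_mulVec_kron_Evec]

theorem statement9_general {m : ℕ} (εtx εrx σsq : Fin (m + 1) → ℝ)
    (x : Fin (m + 2) × Fin (m + 2) → ℂ) (w : Fin (m + 2) → ℂ)
    (hden : qf x (Rmat (m + 1) εtx εrx σsq)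
      (kron (Lmat (m + 1) *ᵥ Epad m fun i => εtx i.castSucc) w) ≠ 0) :
    Complex.exp (Complex.I * εtx (Fin.last m)) =
      qf x (Rmat (m + 1) εtx εrx σsq) (kron (Epad m fun i => εtx i.castSucc) w) /
        qf x (Rmat (m + 1) εtx εrx σsq)
          (kron (Lmat (m + 1) *ᵥ Epad m fun i => εtx i.castSucc) w) := by
  rw [eq_div_iff hden]
  simp only [qf_eq_star_dotProduct_mulVec, Rmat_mulVec_kron_Epad, dotProduct_smul, smul_eq_mul]

/-- Corollary 1, eq. (16): if u_1^† R u_3 ≠ 0, then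
exp(j·ε_tx,K) = (u_1^† R u_1) / (u_1^† R u_3). -/
theorem statement9 (Kp : ℕ) (hKp : 1 ≤ Kp) (εtx εrx : Fin (Kp + 1) → ℝ)
    (σsq : Fin (Kp + 1) → ℝ) (hσ : ∀ k, 0 < σsq k)
    (hden : qf (u1 Kp (fun i => εtx i.castSucc) (fun i => εrx i.castSucc)) (Rmat (Kp + 1) εtx εrx σsq)
        (u3 Kp (fun i => εtx i.castSucc) (fun i => εrx i.castSucc)) ≠ 0) :
    Complex.exp (Complex.I * (εtx (Fin.last Kp) : ℂ)) =
      qf (u1 Kp (fun i => εtx i.castSucc) (fun i => εrx i.castSucc)) (Rmat (Kp + 1) εtx εrx σsq)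
          (u1 Kp (fun i => εtx i.castSucc) (fun i => εrx i.castSucc)) /
        qf (u1 Kp (fun i => εtx i.castSucc) (fun i => εrx i.castSucc)) (Rmat (Kp + 1) εtx εrx σsq)
          (u3 Kp (fun i => εtx i.castSucc) (fun i => εrx i.castSucc)) :=
  statement9_general εtx εrx σsq _ _ hden
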